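/- Let K be a finite-dimensional Hopf algebra over a field with antipode S, and let I ⊆ K be a subalgebra which is a left coideal (Δ(I) ⊆ K ⊗ I) and satisfies S(I) ⊆ I. Then Δ(I) ⊆ I ⊗ I, i.e. I is a sub-bialgebra of K (hence a Hopf subalgebra). -/

import Mathlib

open TensorProduct

/-!
It suffices that `S` maps `I` onto itself: then `Δ(S y) = S y₂ ⊗ S y₁` puts `Δ(I)` into `I ⊗ K`,
and `I ⊗ K ∩ K ⊗ I = I ⊗ I`.

For surjectivity, let `P` be the projection of `I` onto the Fitting component on which `S` is
bijective, so that `Sⁿ P = Sⁿ` on `I` for large `n`. If `Sʲ⁺¹ P = Sʲ⁺¹` on `I`, then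
`Sʲ⁺¹ x₁ ⊗ P x₂ = Sʲ⁺¹ (P x)₁ ⊗ (P x)₂` for `x ∈ I`: both sides agree after applying `Sʲ⁺¹` to the
second leg, where it can be undone. Computing `Sʲ (x₁ · S x₂ · P x₃)` by cancelling the first two
factors gives `Sʲ (P x)`, and by cancelling the last two gives `Sʲ x`; hence `Sʲ P = Sʲ` on `I`.
Descending to `j = 0`, `P` is the identity.
-/

section DrazinInverse

/-- `c` is a Drazin inverse of `a`. For an endomorphism `a` of a finite-dimensional space, `c * a`
is the projection onto the Fitting component on which `a` is bijective. -/
structure IsDrazinInverse {M : Type*} [Monoid M] (a c : M) : Prop where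
  commute : Commute a c
  mul_mul_cancel : c * a * c = c
  exists_pow_succ_mul : ∃ n, a ^ (n + 1) * c = a ^ n

namespace IsDrazinInverse

variable {M N : Type*} [Monoid M] [Monoid N] {a c : M}

theorem map (h : IsDrazinInverse a c) (f : M →* N) : IsDrazinInverse (f a) (f c) where
  commute := h.commute.map f
  mul_mul_cancel := by simp only [← map_mul, h.mul_mul_cancel]
  exists_pow_succ_mul := h.exists_pow_succ_mul.imp fun n hn => by
    simp only [← map_pow, ← map_mul, hn]

theorem pow_succ_mul_pow_succ (h : IsDrazinInverse a c) (j : ℕ) :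
    c ^ (j + 1) * a ^ (j + 1) = c * a := by
  have idem : IsIdempotentElem (c * a) := by
    rw [IsIdempotentElem, ← mul_assoc, h.mul_mul_cancel]
  rw [← h.commute.symm.mul_pow, idem.pow_succ_eq]

theorem exists_mul_mul_pow (h : IsDrazinInverse a c) :
    ∃ n, ∀ m, n ≤ m → c * a * a ^ m = a ^ m := by
  obtain ⟨n, hn⟩ := h.exists_pow_succ_mul
  refine ⟨n, fun m hm => ?_⟩
  obtain ⟨d, rfl⟩ := Nat.exists_eq_add_of_le hm
  rw [mul_assoc, ← pow_succ', ← (h.commute.pow_left _).eq, add_right_comm, add_comm _ d, pow_add,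
    mul_assoc, hn, ← pow_add, add_comm]

end IsDrazinInverse

theorem exists_isDrazinInverse_of_isArtinianRing {R : Type*} [CommRing R] [IsArtinianRing R]
    (a : R) : ∃ c, IsDrazinInverse a c := by
  obtain ⟨n, b, hb⟩ := IsArtinian.exists_pow_succ_smul_dvd a (1 : R)
  have hab : a ^ n * (a * b) = a ^ n := by simpa [pow_succ, mul_assoc] using hb
  have cancel (m : ℕ) : a ^ n * (a * b) ^ m = a ^ n := by
    induction m with
    | zero => rw [pow_zero, mul_one]
    | succ m ih => rw [pow_succ, ← mul_assoc, ih, hab]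
  refine ⟨a ^ n * b ^ (n + 1), Commute.all _ _, ?_, n, ?_⟩
  · calc a ^ n * b ^ (n + 1) * a * (a ^ n * b ^ (n + 1))
        = a ^ n * (a * b) ^ (n + 1) * b ^ (n + 1) := by ring
      _ = a ^ n * b ^ (n + 1) := by rw [cancel]
  · calc a ^ (n + 1) * (a ^ n * b ^ (n + 1))
        = a ^ n * (a * b) ^ (n + 1) := by ring
      _ = a ^ n := cancel _

theorem exists_isDrazinInverse_of_isIntegral {k A : Type*} [Field k] [Ring A] [Algebra k A]
    {a : A} (ha : IsIntegral k a) : ∃ c, IsDrazinInverse a c := by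
  have : Module.Finite k (Algebra.adjoin k {a}) :=
    Module.Finite.iff_fg.mpr ha.fg_adjoin_singleton
  have : IsArtinianRing (Algebra.adjoin k {a}) := IsArtinianRing.of_finite k _
  obtain ⟨c, hc⟩ := exists_isDrazinInverse_of_isArtinianRing
    (⟨a, Algebra.self_mem_adjoin_singleton k a⟩ : Algebra.adjoin k {a})
  exact ⟨c, hc.map (Algebra.adjoin k {a}).val.toMonoidHom⟩

-- `P` restricts to the Fitting projection of `f` on `V`; its values off `V` are arbitrary.
theorem exists_fitting_projection {k M : Type*} [Field k] [AddCommGroup M] [Module k M]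
    (f : Module.End k M) {V : Submodule k M} [FiniteDimensional k V] (hV : ∀ x ∈ V, f x ∈ V) :
    ∃ P : Module.End k M,
      (∀ j, ∃ r : Module.End k M, ∀ x ∈ V, r ((f ^ (j + 1)) x) = P x) ∧
      (∀ j, ∀ x ∈ V, ∃ y ∈ V, (f ^ (j + 1)) y = P x) ∧
      ∃ n, ∀ m, n ≤ m → ∀ x ∈ V, (f ^ m) (P x) = (f ^ m) x ∧ P ((f ^ m) x) = (f ^ m) x := by
  obtain ⟨p, hp⟩ := V.subtype.exists_leftInverse_of_injective V.ker_subtype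
  let s : Module.End k V := f.restrict hV
  obtain ⟨c, hc⟩ := exists_isDrazinInverse_of_isIntegral (Algebra.IsIntegral.isIntegral (R := k) s)
  obtain ⟨n, hn⟩ := hc.exists_mul_mul_pow
  let extend (h : Module.End k V) : Module.End k M := V.subtype ∘ₗ h ∘ₗ p
  have extend_coe (h : Module.End k V) (v : V) : extend h v = h v := by
    simpa [extend] using congr(((h ($hp v) : V) : M))
  have coe_pow (j : ℕ) (v : V) : (f ^ j) v = (s ^ j) v := by
    rw [Module.End.pow_restrict]; rfl
  refine ⟨extend (c * s), fun j => ⟨extend (c ^ (j + 1)), fun x hx => ?_⟩, fun j x hx => ?_,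
    n, fun m hm x hx => ⟨?_, ?_⟩⟩ <;> lift x to V using hx
  · rw [coe_pow, extend_coe, extend_coe, ← Module.End.mul_apply, hc.pow_succ_mul_pow_succ]
  · refine ⟨(c ^ (j + 1)) x, Subtype.prop _, ?_⟩
    rw [coe_pow, extend_coe, ← Module.End.mul_apply, (hc.commute.pow_pow _ _).eq,
      hc.pow_succ_mul_pow_succ]
  · have hcs : Commute (c * s) (s ^ m) := hc.commute.symm.mul_left (.refl s) |>.pow_right m
    rw [extend_coe, coe_pow, coe_pow, ← Module.End.mul_apply, ← hcs.eq, hn m hm]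
  · rw [coe_pow, extend_coe, ← Module.End.mul_apply, hn m hm]

end DrazinInverse

section Antipode

open Coalgebra HopfAlgebra WithConv

universe u

variable {R A B : Type*} [CommSemiring R] [Semiring A] [HopfAlgebra R A] [Semiring B] [Algebra R B]

theorem algHom_convMul_comp_antipode (f : A →ₐ[R] B) :
    toConv f.toLinearMap * toConv (f.toLinearMap ∘ₗ antipode R) = 1 := by
  have h := LinearMap.algHom_comp_convMul_distrib f (toConv .id) (toConv (antipode R))
  rw [LinearMap.id_mul_antipode] at h
  refine WithConv.ofConv_injective (h.symm.trans ?_)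
  ext x
  simp

theorem comp_antipode_convMul_algHom (f : A →ₐ[R] B) :
    toConv (f.toLinearMap ∘ₗ antipode R) * toConv f.toLinearMap = 1 := by
  have h := LinearMap.algHom_comp_convMul_distrib f (toConv (antipode R)) (toConv .id)
  rw [LinearMap.antipode_mul_id] at h
  refine WithConv.ofConv_injective (h.symm.trans ?_)
  ext x
  simp

theorem includeLeft_convMul_includeRight {C : Type*} [Semiring C] [Bialgebra R C] :
    toConv (Algebra.TensorProduct.includeLeft : C →ₐ[R] C ⊗[R] C).toLinearMap *
      toConv (Algebra.TensorProduct.includeRight : C →ₐ[R] C ⊗[R] C).toLinearMap =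
      toConv comul := by
  ext x
  rw [(ℛ R x).convMul_apply]
  simp [(ℛ R x).eq]

theorem comul_antipode (x : A) :
    comul (antipode R x) =
      TensorProduct.map (antipode R) (antipode R) (TensorProduct.comm R A A (comul x)) := by
  let i₁ : A →ₐ[R] A ⊗[R] A := Algebra.TensorProduct.includeLeft
  let i₂ : A →ₐ[R] A ⊗[R] A := Algebra.TensorProduct.includeRight
  let leftInv := toConv (i₂.toLinearMap ∘ₗ antipode R) * toConv (i₁.toLinearMap ∘ₗ antipode R)
  have left_inv : leftInv * toConv comul = 1 := by
    rw [← includeLeft_convMul_includeRight, mul_assoc,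
      ← mul_assoc (toConv (i₁.toLinearMap ∘ₗ antipode R)), comp_antipode_convMul_algHom, one_mul,
      comp_antipode_convMul_algHom]
  have eq_leftInv : toConv (comul ∘ₗ antipode R) = leftInv :=
    (left_inv_eq_right_inv left_inv LinearMap.comul_right_inv).symm
  calc comul (antipode R x) = leftInv x := congr($eq_leftInv x)
    _ = _ := by
      rw [(ℛ R x).convMul_apply]
      conv_rhs => rw [← (ℛ R x).eq]
      simp [i₁, i₂]

theorem counit_antipode_pow (j : ℕ) (x : A) :
    counit (R := R) ((antipode R ^ j) x) = counit (R := R) x := by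
  induction j with
  | zero => rfl
  | succ j ih => rw [pow_succ', Module.End.mul_apply, counit_antipode, ih]

theorem comul_antipode_pow (j : ℕ) (x : A) :
    comul ((antipode R ^ j) x) =
      (TensorProduct.comm R A A ^ j)
        (TensorProduct.map (antipode R ^ j) (antipode R ^ j) (comul x)) := by
  induction j generalizing x with
  | zero => simp
  | succ j ih =>
    rw [pow_succ, Module.End.mul_apply, ih, comul_antipode, TensorProduct.map_map,
      TensorProduct.map_comm, pow_succ]
    rfl

theorem comul_antipode_pow_of_even {j : ℕ} (hj : Even j) (x : A) :
    comul ((antipode R ^ j) x) =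
      TensorProduct.map (antipode R ^ j) (antipode R ^ j) (comul x) := by
  have comm_sq : TensorProduct.comm R A A ^ 2 = 1 :=
    LinearEquiv.ext fun z => TensorProduct.comm_comm R A A z
  obtain ⟨i, rfl⟩ := hj.exists_two_nsmul
  rw [comul_antipode_pow, nsmul_eq_mul, Nat.cast_ofNat, pow_mul, comm_sq, one_pow,
    LinearEquiv.coe_one, id]

theorem map_antipode_pow_comul_congr {j : ℕ} {x y : A}
    (h : (antipode R ^ j) x = (antipode R ^ j) y) :
    TensorProduct.map (antipode R ^ j) (antipode R ^ j) (comul x) =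
      TensorProduct.map (antipode R ^ j) (antipode R ^ j) (comul y) := by
  apply (TensorProduct.comm R A A ^ j).injective
  rw [← comul_antipode_pow, ← comul_antipode_pow, h]

-- `S` reverses products, so the codomain is the `j`-fold opposite of `A`.
theorem exists_algHom_eq_equiv_comp_antipode_pow (R : Type*) (A : Type u) [CommSemiring R]
    [Semiring A] [HopfAlgebra R A] (j : ℕ) :
    ∃ (B : Type u) (_ : Semiring B) (_ : Algebra R B) (f : A →ₐ[R] B) (e : A ≃ₗ[R] B),
      f.toLinearMap = e.toLinearMap ∘ₗ (antipode R ^ j) := by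
  induction j with
  | zero => exact ⟨A, _, _, .id R A, .refl R A, rfl⟩
  | succ j ih =>
    obtain ⟨B, _, _, f, e, hf⟩ := ih
    refine ⟨Bᵐᵒᵖ, _, _, f.op.comp (antipodeAlgHomOp R A), e.trans (MulOpposite.opLinearEquiv R), ?_⟩
    ext x
    simpa [pow_succ] using congr($hf (antipode R x))

end Antipode

section LeftCoideal

open Coalgebra HopfAlgebra WithConv

/-- `V` is a left coideal of the coalgebra `C`. Over a general base the map `C ⊗ V → C ⊗ C` need not
be injective, so `Δ(V) ⊆ C ⊗ V` is read as lying in its image. -/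
def IsLeftCoideal {R C : Type*} [CommSemiring R] [AddCommMonoid C] [Module R C] [Coalgebra R C]
    (V : Submodule R C) : Prop :=
  ∀ x ∈ V, comul (R := R) x ∈ LinearMap.range (TensorProduct.map LinearMap.id V.subtype)

namespace IsLeftCoideal

section Coalgebra

variable {R C M N : Type*} [CommSemiring R] [AddCommMonoid C] [Module R C] [Coalgebra R C]
  [AddCommMonoid M] [Module R M] [AddCommMonoid N] [Module R N] {V : Submodule R C}

theorem map_comul_congr (hV : IsLeftCoideal V) (f : C →ₗ[R] M) {g g' : C →ₗ[R] N}
    (hg : ∀ v ∈ V, g v = g' v) {x : C} (hx : x ∈ V) :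
    TensorProduct.map f g (comul x) = TensorProduct.map f g' (comul x) := by
  have hg' : g ∘ₗ V.subtype = g' ∘ₗ V.subtype := LinearMap.ext fun v => hg v v.2
  obtain ⟨z, hz⟩ := hV x hx
  rw [← hz, TensorProduct.map_map, TensorProduct.map_map, hg']

end Coalgebra

section HopfAlgebra

variable {R A B : Type*} [CommSemiring R] [Semiring A] [HopfAlgebra R A] [Semiring B] [Algebra R B]
  {V : Submodule R A} {P : A →ₗ[R] A}

-- In the convolution algebra, `f ∘ P = f * (f ∘ S * f ∘ P)`, and on `V` the bracket is the unit.
theorem algHom_apply_eq_of_map_comp_antipode_comul (hV : IsLeftCoideal V) (f : A →ₐ[R] B)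
    (counit_P : ∀ x ∈ V, counit (R := R) (P x) = counit (R := R) x)
    (comul_P : ∀ x ∈ V, TensorProduct.map (f.toLinearMap ∘ₗ antipode R) P (comul x) =
      TensorProduct.map (f.toLinearMap ∘ₗ antipode R) LinearMap.id (comul (P x)))
    {x : A} (hx : x ∈ V) : f (P x) = f x := by
  let F := toConv f.toLinearMap
  let FS := toConv (f.toLinearMap ∘ₗ antipode R)
  let FP := toConv (f.toLinearMap ∘ₗ P)
  have conv_eq_one : ∀ v ∈ V, (FS * FP) v = (1 : WithConv (A →ₗ[R] B)) v := by
    intro v hv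
    calc (FS * FP) v
        = LinearMap.mul' R B (TensorProduct.map LinearMap.id f.toLinearMap
            (TensorProduct.map (f.toLinearMap ∘ₗ antipode R) P (comul v))) := by
          rw [TensorProduct.map_map]; rfl
      _ = (FS * F) (P v) := by
          rw [comul_P v hv, TensorProduct.map_map]; rfl
      _ = (1 : WithConv (A →ₗ[R] B)) v := by
          rw [comp_antipode_convMul_algHom, LinearMap.convOne_apply, counit_P v hv,
            LinearMap.convOne_apply]
  calc f (P x) = (F * (FS * FP)) x := by
        rw [← mul_assoc, algHom_convMul_comp_antipode, one_mul]; rfl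
    _ = (F * 1) x := congr(LinearMap.mul' R B $(hV.map_comul_congr _ conv_eq_one hx))
    _ = f x := by rw [mul_one]; rfl

theorem map_antipode_pow_comul_eq (hV : IsLeftCoideal V) {r : A →ₗ[R] A} {j : ℕ}
    (P_mem : ∀ x ∈ V, P x ∈ V)
    (comul_P : ∀ x ∈ V, TensorProduct.map LinearMap.id P (comul (P x)) = comul (R := R) (P x))
    (r_apply : ∀ x ∈ V, r ((antipode R ^ j) x) = P x)
    (hP : ∀ x ∈ V, (antipode R ^ j) (P x) = (antipode R ^ j) x) {x : A} (hx : x ∈ V) :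
    TensorProduct.map (antipode R ^ j) P (comul x) =
      TensorProduct.map (antipode R ^ j) LinearMap.id (comul (P x)) := by
  have map_r : ∀ v ∈ V, TensorProduct.map (antipode R ^ j) P (comul v) =
      TensorProduct.map LinearMap.id r
        (TensorProduct.map (antipode R ^ j) (antipode R ^ j) (comul v)) := by
    intro v hv
    rw [TensorProduct.map_map]
    exact hV.map_comul_congr _ (fun w hw => (r_apply w hw).symm) hv
  calc TensorProduct.map (antipode R ^ j) P (comul x)
      = TensorProduct.map (antipode R ^ j) P (comul (P x)) := by
        rw [map_r x hx, map_r _ (P_mem x hx), map_antipode_pow_comul_congr (hP x hx)]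
    _ = TensorProduct.map (antipode R ^ j) LinearMap.id (comul (P x)) := by
        conv_rhs => rw [← comul_P x hx, TensorProduct.map_map]
        rfl

theorem antipode_pow_apply_eq_of_succ (hV : IsLeftCoideal V) {r : A →ₗ[R] A} {j : ℕ}
    (P_mem : ∀ x ∈ V, P x ∈ V)
    (comul_P : ∀ x ∈ V, TensorProduct.map LinearMap.id P (comul (P x)) = comul (R := R) (P x))
    (r_apply : ∀ x ∈ V, r ((antipode R ^ (j + 1)) x) = P x)
    (hP : ∀ x ∈ V, (antipode R ^ (j + 1)) (P x) = (antipode R ^ (j + 1)) x)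
    {x : A} (hx : x ∈ V) : (antipode R ^ j) (P x) = (antipode R ^ j) x := by
  obtain ⟨B, _, _, f, e, hf⟩ := exists_algHom_eq_equiv_comp_antipode_pow R A j
  have hfS : f.toLinearMap ∘ₗ antipode R = e.toLinearMap ∘ₗ (antipode R ^ (j + 1)) := by
    rw [hf, pow_succ]; rfl
  have f_P : f (P x) = f x := by
    refine hV.algHom_apply_eq_of_map_comp_antipode_comul f (fun v hv => ?_) (fun v hv => ?_) hx
    · rw [← counit_antipode_pow (j + 1), hP v hv, counit_antipode_pow]
    · have map_comul := hV.map_antipode_pow_comul_eq P_mem comul_P r_apply hP hv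
      simpa only [hfS, TensorProduct.map_map, LinearMap.id_comp] using
        congr(TensorProduct.map e.toLinearMap LinearMap.id $map_comul)
  apply e.injective
  exact congr($hf (P x)).symm.trans (f_P.trans congr($hf x))

end HopfAlgebra

section Field

variable {k K : Type*} [Field k] [Ring K] [HopfAlgebra k K] {V : Submodule k K}

theorem exists_mem_antipode_eq [FiniteDimensional k V] (hV : IsLeftCoideal V)
    (hS : ∀ x ∈ V, antipode k x ∈ V) {x : K} (hx : x ∈ V) : ∃ y ∈ V, antipode k y = x := by
  obtain ⟨P, left_inv, P_eq, n, pow_P⟩ := exists_fitting_projection (antipode k (A := K)) hS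
  have P_mem : ∀ x ∈ V, P x ∈ V := by
    intro x hx
    obtain ⟨y, hy, hyx⟩ := P_eq 0 x hx
    exact hyx ▸ hS y hy
  have comul_P : ∀ x ∈ V,
      TensorProduct.map LinearMap.id P (comul (P x)) = comul (R := k) (P x) := by
    intro x hx
    obtain ⟨y, hy, hyx⟩ := P_eq (2 * n + 1) x hx
    rw [← hyx, comul_antipode_pow_of_even ⟨n + 1, by ring⟩, TensorProduct.map_map]
    exact hV.map_comul_congr _ (fun v hv => (pow_P _ (by lia) v hv).2) hy
  have pow_P_eq (j : ℕ) (hj : j ≤ n) : ∀ x ∈ V, (antipode k ^ j) (P x) = (antipode k ^ j) x := by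
    induction hj using Nat.decreasingInduction with
    | self => exact fun x hx => (pow_P n le_rfl x hx).1
    | of_succ j _ ih =>
      obtain ⟨r, hr⟩ := left_inv j
      exact fun x hx => hV.antipode_pow_apply_eq_of_succ P_mem comul_P hr ih hx
  have P_eq_self : P x = x := pow_P_eq 0 n.zero_le x hx
  simpa [P_eq_self] using P_eq 0 x hx

end Field

end IsLeftCoideal

theorem mem_range_map_subtype_subtype {k M N : Type*} [Field k] [AddCommGroup M] [Module k M]
    [AddCommGroup N] [Module k N] {V : Submodule k M} {W : Submodule k N} {z : M ⊗[k] N}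
    (hV : z ∈ LinearMap.range (TensorProduct.map V.subtype (LinearMap.id : N →ₗ[k] N)))
    (hW : z ∈ LinearMap.range (TensorProduct.map (LinearMap.id : M →ₗ[k] M) W.subtype)) :
    z ∈ LinearMap.range (TensorProduct.map V.subtype W.subtype) := by
  obtain ⟨p, hp⟩ := V.subtype.exists_leftInverse_of_injective V.ker_subtype
  obtain ⟨v, rfl⟩ := hV
  obtain ⟨w, hw⟩ := hW
  have hpV : TensorProduct.map (V.subtype ∘ₗ p) LinearMap.id
      (TensorProduct.map V.subtype (LinearMap.id : N →ₗ[k] N) v) =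
        TensorProduct.map V.subtype LinearMap.id v := by
    rw [TensorProduct.map_map, LinearMap.comp_assoc, hp, LinearMap.comp_id, LinearMap.comp_id]
  refine ⟨TensorProduct.map p LinearMap.id w, ?_⟩
  rw [← hpV, ← hw, TensorProduct.map_map, TensorProduct.map_map]
  rfl

end LeftCoideal

theorem stmt11_general (k : Type*) [Field k] (K : Type*) [Ring K] [HopfAlgebra k K]
    (V : Submodule k K) [FiniteDimensional k V]
    (hcoideal : ∀ x ∈ V, Coalgebra.comul (R := k) x ∈
      LinearMap.range (TensorProduct.map (LinearMap.id : K →ₗ[k] K) V.subtype))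
    (hS : ∀ x ∈ V, HopfAlgebra.antipode (R := k) x ∈ V) :
    ∀ x ∈ V, Coalgebra.comul (R := k) x ∈
      LinearMap.range (TensorProduct.map V.subtype V.subtype) := by
  intro x hx
  refine mem_range_map_subtype_subtype ?_ (hcoideal x hx)
  obtain ⟨y, hy, rfl⟩ := IsLeftCoideal.exists_mem_antipode_eq hcoideal hS hx
  obtain ⟨z, hz⟩ := hcoideal y hy
  let s : V →ₗ[k] V := (HopfAlgebra.antipode k).restrict hS
  refine ⟨TensorProduct.map s (HopfAlgebra.antipode k) (TensorProduct.comm k K V z), ?_⟩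
  rw [comul_antipode, ← hz, ← TensorProduct.map_comm, TensorProduct.map_map, TensorProduct.map_map]
  rfl

theorem stmt11 (k : Type*) [Field k] (K : Type*) [Ring K] [HopfAlgebra k K]
    [FiniteDimensional k K] (I : Subalgebra k K)
    (hcoideal : ∀ x ∈ I, Coalgebra.comul (R := k) x ∈
      LinearMap.range (TensorProduct.map (LinearMap.id : K →ₗ[k] K)
        (Subalgebra.toSubmodule I).subtype))
    (hS : ∀ x ∈ I, HopfAlgebra.antipode (R := k) x ∈ I) :
    ∀ x ∈ I, Coalgebra.comul (R := k) x ∈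
      LinearMap.range (TensorProduct.map (Subalgebra.toSubmodule I).subtype
        (Subalgebra.toSubmodule I).subtype) := by
  exact stmt11_general k K (Subalgebra.toSubmodule I) hcoideal hS
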